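/- Let ε > 0, γ > 0, τ ∈ ℝ and r ≥ 0. Set w = (γ + r) + iτ ∈ ℂ and let √w denote the principal square root of w (the one with positive real part). Then (γ + |τ| + r)^{1/2} · ∫_{−∞}^{0} | exp( √w · z / √ε ) |² dz ≤ √ε. -/

import Mathlib

open MeasureTheory

/-- The key resolvent bound behind Lemma 9.4 of the paper: with `w = (γ + r) + iτ` and `√w`
the principal square root (the one with positive real part),
`(γ + |τ| + r)^{1/2} ∫_{−∞}^{0} |exp(√w z/√ε)|² dz ≤ √ε`. -/
theorem heat_resolvent_bound (ε γ τ r : ℝ) (hε : 0 < ε) (hγ : 0 < γ) (hr : 0 ≤ r) :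
    Real.sqrt (γ + |τ| + r) *
        ∫ z in Set.Iio (0 : ℝ),
          ‖Complex.exp ((((γ + r : ℝ) : ℂ) + (τ : ℂ) * Complex.I) ^ ((1 : ℂ) / 2)
              * (z : ℂ) / ((Real.sqrt ε : ℝ) : ℂ))‖ ^ 2
      ≤ Real.sqrt ε := by
  set w : ℂ := ((γ + r : ℝ) : ℂ) + (τ : ℂ) * Complex.I with hw
  have hwre : w.re = γ + r := by simp [hw]
  have hwim : w.im = τ := by simp [hw]
  have h1 : |τ| ≤ ‖w‖ := by rw [← hwim]; exact Complex.abs_im_le_norm w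
  have hτ : 0 ≤ |τ| := abs_nonneg τ
  have hsε : 0 < Real.sqrt ε := Real.sqrt_pos.2 hε
  set s : ℂ := w ^ ((1 : ℂ) / 2) with hs
  have hsre : s.re = Real.sqrt ((‖w‖ + (γ + r)) / 2) := by
    rw [hs, one_div, Complex.cpow_inv_two_re, hwre]
  have ha : 0 < s.re := by
    rw [hsre]; apply Real.sqrt_pos.2; linarith
  have hle : Real.sqrt (γ + |τ| + r) ≤ 2 * s.re := by
    apply Real.sqrt_le_iff.2
    refine ⟨by linarith, ?_⟩
    rw [mul_pow, hsre, Real.sq_sqrt (by linarith)]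
    linarith
  have hc : 0 < 2 * s.re / Real.sqrt ε := by positivity
  have hint : ∀ z : ℝ, ‖Complex.exp (s * (z : ℂ) / ((Real.sqrt ε : ℝ) : ℂ))‖ ^ 2
      = Real.exp (2 * s.re / Real.sqrt ε * z) := by
    intro z
    rw [Complex.norm_exp, ← Real.exp_nat_mul, Complex.div_ofReal_re, Complex.re_mul_ofReal]
    congr 1
    push_cast
    ring
  simp_rw [hint]
  rw [← integral_Iic_eq_integral_Iio, integral_exp_mul_Iic hc, mul_zero, Real.exp_zero,
    one_div_div, ← mul_div_assoc, div_le_iff₀ (by linarith), mul_comm]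
  exact mul_le_mul_of_nonneg_left hle hsε.le
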